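/- Suppose L0 ∈ F_κ minimizes S_m over F_κ, set l_i = L0(x^(i)) for i = 1,…,2m, and define ĥL(x) = max_{1≤i≤2m} (l_i − κ d(x, x^(i)))_+ and t̃L(x) = min_{1≤i≤2m} (l_i + κ d(x, x^(i))). Then for every γ ∈ [0,1], the convex combination γ ĥL + (1−γ) t̃L belongs to F_κ and minimizes S_m over F_κ. (Paper's Corollary 1.) -/

import Mathlib

/-- `Fκ κ` is the class of nonnegative κ-Lipschitz functions on a metric space. -/
def Fkappa {X : Type*} [MetricSpace X] (κ : ℝ) : Set (X → ℝ) :=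
  {L | (∀ x, 0 ≤ L x) ∧ ∀ x z, |L x - L z| ≤ κ * dist x z}

/-- The empirical LS-GAN objective on `2m` points `xs` (the first `m` real, the last `m`
generated): `S_m(L) = (1/m) Σᵢ L(x⁽ⁱ⁾) + (λ/m) Σᵢ (d(x⁽ⁱ⁾, x⁽ᵐ⁺ⁱ⁾) + L(x⁽ⁱ⁾) − L(x⁽ᵐ⁺ⁱ⁾))₊`. -/
noncomputable def empiricalS {X : Type*} [MetricSpace X] (lam : ℝ) (m : ℕ)
    (xs : Fin (m + m) → X) (L : X → ℝ) : ℝ :=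
  (1 / (m : ℝ)) * ∑ i : Fin m, L (xs (Fin.castAdd m i)) +
    (lam / (m : ℝ)) * ∑ i : Fin m,
      max (dist (xs (Fin.castAdd m i)) (xs (Fin.natAdd m i)) +
        L (xs (Fin.castAdd m i)) - L (xs (Fin.natAdd m i))) 0

theorem mem_Fkappa_of_le_add {X : Type*} [MetricSpace X] {κ : ℝ} {L : X → ℝ}
    (h0 : ∀ x, 0 ≤ L x) (h : ∀ x z, L x ≤ L z + κ * dist x z) : L ∈ Fkappa κ := by
  refine ⟨h0, fun x z => abs_sub_le_iff.2 ⟨?_, ?_⟩⟩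
  · linarith [h x z]
  · rw [dist_comm]
    linarith [h z x]

theorem le_add_of_mem_Fkappa {X : Type*} [MetricSpace X] {κ : ℝ} {L : X → ℝ}
    (hL : L ∈ Fkappa κ) (x z : X) : L x ≤ L z + κ * dist x z := by
  linarith [(abs_sub_le_iff.1 (hL.2 x z)).1]

theorem convexCombination_mem_Fkappa {X : Type*} [MetricSpace X] {κ γ : ℝ} {L M : X → ℝ}
    (hL : L ∈ Fkappa κ) (hM : M ∈ Fkappa κ) (hγ0 : 0 ≤ γ) (hγ1 : γ ≤ 1) :
    (fun x => γ * L x + (1 - γ) * M x) ∈ Fkappa κ := by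
  have hγ : 0 ≤ 1 - γ := sub_nonneg.2 hγ1
  refine mem_Fkappa_of_le_add
    (fun x => add_nonneg (mul_nonneg hγ0 (hL.1 x)) (mul_nonneg hγ (hM.1 x))) fun x z => ?_
  have h₁ := mul_le_mul_of_nonneg_left (le_add_of_mem_Fkappa hL x z) hγ0
  have h₂ := mul_le_mul_of_nonneg_left (le_add_of_mem_Fkappa hM x z) hγ
  linarith

/-- The upper envelope of truncated downward cones is nonnegative and `κ`-Lipschitz. -/
theorem iSup_cone_mem_Fkappa {X ι : Type*} [MetricSpace X] [Finite ι] [Nonempty ι] {κ : ℝ}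
    (hκ : 0 ≤ κ) (xs : ι → X) (l : ι → ℝ) :
    (fun x => ⨆ i, max (l i - κ * dist x (xs i)) 0) ∈ Fkappa κ := by
  have hbdd (x : X) : BddAbove (Set.range fun i => max (l i - κ * dist x (xs i)) 0) :=
    (Set.finite_range _).bddAbove
  refine mem_Fkappa_of_le_add (fun x => Real.iSup_nonneg fun i => le_max_right _ _)
    fun x z => ciSup_le fun i => ?_
  have hi := le_ciSup (hbdd z) i
  have ht := mul_le_mul_of_nonneg_left (dist_triangle_left z (xs i) x) hκ
  have hd : 0 ≤ κ * dist x z := mul_nonneg hκ dist_nonneg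
  refine max_le ?_ ?_
  · linarith [le_max_left (l i - κ * dist z (xs i)) 0]
  · linarith [le_max_right (l i - κ * dist z (xs i)) 0]

/-- The lower envelope of upward cones with nonnegative apexes is nonnegative and
`κ`-Lipschitz. -/
theorem iInf_cone_mem_Fkappa {X ι : Type*} [MetricSpace X] [Finite ι] [Nonempty ι] {κ : ℝ}
    (hκ : 0 ≤ κ) (xs : ι → X) {l : ι → ℝ} (hl : ∀ i, 0 ≤ l i) :
    (fun x => ⨅ i, (l i + κ * dist x (xs i))) ∈ Fkappa κ := by
  have hbdd (x : X) : BddBelow (Set.range fun i => l i + κ * dist x (xs i)) :=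
    (Set.finite_range _).bddBelow
  refine mem_Fkappa_of_le_add
    (fun x => Real.iInf_nonneg fun i => add_nonneg (hl i) (mul_nonneg hκ dist_nonneg))
    fun x z => sub_le_iff_le_add.1 (le_ciInf fun i => ?_)
  have hi := ciInf_le (hbdd x) i
  have ht := mul_le_mul_of_nonneg_left (dist_triangle x z (xs i)) hκ
  linarith

theorem iSup_cone_apply {X ι : Type*} [MetricSpace X] [Finite ι] {κ : ℝ} {L : X → ℝ}
    (hL : L ∈ Fkappa κ) (xs : ι → X) (j : ι) :
    ⨆ i, max (L (xs i) - κ * dist (xs j) (xs i)) 0 = L (xs j) := by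
  have : Nonempty ι := ⟨j⟩
  refine le_antisymm (ciSup_le fun i => max_le ?_ (hL.1 _)) ?_
  · rw [dist_comm]
    linarith [le_add_of_mem_Fkappa hL (xs i) (xs j)]
  · refine le_ciSup_of_le (Set.finite_range _).bddAbove j ?_
    simp

theorem iInf_cone_apply {X ι : Type*} [MetricSpace X] [Finite ι] {κ : ℝ} {L : X → ℝ}
    (hL : L ∈ Fkappa κ) (xs : ι → X) (j : ι) :
    ⨅ i, (L (xs i) + κ * dist (xs j) (xs i)) = L (xs j) := by
  have : Nonempty ι := ⟨j⟩
  refine le_antisymm ?_ (le_ciInf fun i => le_add_of_mem_Fkappa hL (xs j) (xs i))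
  refine ciInf_le_of_le (Set.finite_range _).bddBelow j ?_
  simp

/-- The empirical objective depends only on the values at the sample points. -/
theorem empiricalS_congr {X : Type*} [MetricSpace X] {lam : ℝ} {m : ℕ}
    {xs : Fin (m + m) → X} {L M : X → ℝ} (h : ∀ i, L (xs i) = M (xs i)) :
    empiricalS lam m xs L = empiricalS lam m xs M := by
  simp only [empiricalS, h]

/-- **Paper's Corollary 1**: if `L0 ∈ F_κ` minimizes `S_m`, then for every `γ ∈ [0,1]` the
convex combination `γ ĥL + (1−γ) t̃L` of the two cone-shaped optimal loss functions
belongs to `F_κ` and also minimizes `S_m` over `F_κ`. -/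
theorem lsgan_convex_combination_optimal
    {X : Type*} [MetricSpace X] (κ lam : ℝ) (hκ : 0 < κ) (hlam : 0 < lam)
    (m : ℕ) (hm : 0 < m) (xs : Fin (m + m) → X)
    (L0 : X → ℝ) (hL0 : L0 ∈ Fkappa κ)
    (hmin : ∀ L ∈ Fkappa κ, empiricalS lam m xs L0 ≤ empiricalS lam m xs L)
    (γ : ℝ) (hγ0 : 0 ≤ γ) (hγ1 : γ ≤ 1) :
    (fun x => γ * (⨆ i : Fin (m + m), max (L0 (xs i) - κ * dist x (xs i)) 0) +
        (1 - γ) * ⨅ i : Fin (m + m), (L0 (xs i) + κ * dist x (xs i))) ∈ Fkappa κ ∧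
    (∀ L ∈ Fkappa κ,
      empiricalS lam m xs
          (fun x => γ * (⨆ i : Fin (m + m), max (L0 (xs i) - κ * dist x (xs i)) 0) +
            (1 - γ) * ⨅ i : Fin (m + m), (L0 (xs i) + κ * dist x (xs i)))
        ≤ empiricalS lam m xs L) := by
  have : Nonempty (Fin (m + m)) := ⟨⟨0, by lia⟩⟩
  refine ⟨convexCombination_mem_Fkappa (iSup_cone_mem_Fkappa hκ.le xs fun i => L0 (xs i))
    (iInf_cone_mem_Fkappa hκ.le xs fun i => hL0.1 (xs i)) hγ0 hγ1, fun L hL => ?_⟩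
  refine (empiricalS_congr fun j => ?_).trans_le (hmin L hL)
  simp only [iSup_cone_apply hL0, iInf_cone_apply hL0]
  ring
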